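/- If A is an n×m nonnegative real matrix that, after permutations of rows and of columns, contains a k×k diagonal principal submatrix D_k with rank(D_k) = rank(A) = k and all diagonal entries of D_k positive, then A admits an exact nonnegative rank factorization A = FV with intermediate dimension k. -/

import Mathlib

/-!
Let `U = A.submatrix r c` be invertible of size `A.rank`. The columns of `A` selected by `c` are
then a basis of its column space, so `A = C * B` with `C = A.submatrix id c`. Restricting this
identity to the rows selected by `r` gives `A.submatrix r id = U * B`, which determines `B` and
yields `A = C * (U⁻¹ * R)` with `R = A.submatrix r id`. The factors `C` and `R` inherit
nonnegativity from `A`, and so does `U⁻¹` when `U` is diagonal with positive diagonal.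
-/

open Module

theorem span_range_comp_eq_of_card_eq_finrank {K V n ι : Type*} [DivisionRing K] [AddCommGroup V]
    [Module K V] [Fintype ι] {v : n → V} {c : ι → n}
    [FiniteDimensional K (Submodule.span K (Set.range v))] (hli : LinearIndependent K (v ∘ c))
    (hcard : Fintype.card ι = finrank K (Submodule.span K (Set.range v))) :
    Submodule.span K (Set.range (v ∘ c)) = Submodule.span K (Set.range v) :=
  Submodule.eq_of_le_of_finrank_eq (Submodule.span_mono (Set.range_comp_subset_range c v))
    ((finrank_span_eq_card hli).trans hcard)

section Factorization

variable {K m n ι : Type*} [Field K] [Fintype n] [Fintype ι]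

theorem exists_eq_submatrix_mul_of_linearIndependent_col {A : Matrix m n K} {c : ι → n}
    (hli : LinearIndependent K (A.col ∘ c)) (hrank : A.rank = Fintype.card ι) :
    ∃ B : Matrix ι n K, A = A.submatrix id c * B := by
  have : FiniteDimensional K (Submodule.span K (Set.range A.col)) :=
    .span_of_finite K (Set.finite_range A.col)
  have hspan := span_range_comp_eq_of_card_eq_finrank hli
    (hrank.symm.trans A.rank_eq_finrank_span_cols)
  have hmem (j : n) : ∃ b : ι → K, ∑ t, b t • A.col (c t) = A.col j :=
    (Submodule.mem_span_range_iff_exists_fun K).mp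
      (hspan ▸ Submodule.subset_span (Set.mem_range_self j))
  choose b hb using hmem
  refine ⟨.of fun t j => b j t, Matrix.ext fun i j => ?_⟩
  simpa [Matrix.mul_apply, mul_comm] using (congrFun (hb j) i).symm

theorem eq_submatrix_mul_inv_mul_submatrix [DecidableEq ι] {A : Matrix m n K} {r : ι → m}
    {c : ι → n} (hU : IsUnit (A.submatrix r c)) (hrank : A.rank = Fintype.card ι) :
    A = A.submatrix id c * ((A.submatrix r c)⁻¹ * A.submatrix r id) := by
  have hli : LinearIndependent K (A.col ∘ c) :=
    .of_comp (LinearMap.funLeft K K r) (Matrix.linearIndependent_cols_iff_isUnit.mpr hU)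
  obtain ⟨B, hB⟩ := exists_eq_submatrix_mul_of_linearIndependent_col hli hrank
  have hrows : A.submatrix r id = A.submatrix r c * B :=
    congrArg (Matrix.submatrix · r id) hB
  rwa [hrows, Matrix.nonsing_inv_mul_cancel_left _ _ ((Matrix.isUnit_iff_isUnit_det _).mp hU)]

end Factorization

section Diagonal

variable {K ι : Type*} [Fintype ι] [DecidableEq ι] {U : Matrix ι ι K}

theorem diagonal_inv_mul_of_isDiag [DivisionSemiring K] (hU : U.IsDiag)
    (hne : ∀ i, U i i ≠ 0) : Matrix.diagonal U.diag⁻¹ * U = 1 := by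
  nth_rw 2 [← hU.diagonal_diag]
  rw [Matrix.diagonal_mul_diagonal, ← Matrix.diagonal_one]
  exact congrArg Matrix.diagonal (funext fun i => inv_mul_cancel₀ (hne i))

theorem inv_apply_nonneg_of_isDiag [Field K] [LinearOrder K] [IsStrictOrderedRing K]
    (hU : U.IsDiag) (hpos : ∀ i, 0 < U i i) (i j : ι) : 0 ≤ U⁻¹ i j := by
  rw [Matrix.inv_eq_left_inv (diagonal_inv_mul_of_isDiag hU fun i => (hpos i).ne'),
    Matrix.diagonal_apply]
  split_ifs
  · exact inv_nonneg.mpr (hpos i).le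
  · exact le_rfl

end Diagonal

theorem exists_NRF_of_diagonal_principal_submatrix_general {K m n ι : Type*} [Field K]
    [LinearOrder K] [IsStrictOrderedRing K] [Fintype n] [Fintype ι] {A : Matrix m n K}
    (hA : ∀ i j, 0 ≤ A i j) {r : ι → m} {c : ι → n} (hdiag : (A.submatrix r c).IsDiag)
    (hpos : ∀ i, 0 < A (r i) (c i)) (hrank : A.rank = Fintype.card ι) :
    ∃ (F : Matrix m ι K) (V : Matrix ι n K),
      (∀ i j, 0 ≤ F i j) ∧ (∀ i j, 0 ≤ V i j) ∧ A = F * V := by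
  classical
  have hU : IsUnit (A.submatrix r c) :=
    .of_mul_eq_one_right _ (diagonal_inv_mul_of_isDiag hdiag fun i => (hpos i).ne')
  have hV (t : ι) (j : n) : 0 ≤ ((A.submatrix r c)⁻¹ * A.submatrix r id) t j :=
    Finset.sum_nonneg fun s _ =>
      mul_nonneg (inv_apply_nonneg_of_isDiag hdiag hpos t s) (hA (r s) j)
  exact ⟨A.submatrix id c, (A.submatrix r c)⁻¹ * A.submatrix r id,
    fun i t => hA i (c t), hV, eq_submatrix_mul_inv_mul_submatrix hU hrank⟩

theorem exists_NRF_of_diagonal_principal_submatrix {n m k : ℕ}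
    (A : Matrix (Fin n) (Fin m) ℝ) (hA : ∀ i j, 0 ≤ A i j)
    (ri : Fin k → Fin n) (ci : Fin k → Fin m)
    (hri : Function.Injective ri) (hci : Function.Injective ci)
    (hdiag : ∀ i j : Fin k, i ≠ j → A (ri i) (ci j) = 0)
    (hdpos : ∀ i : Fin k, 0 < A (ri i) (ci i))
    (hrank : A.rank = k) :
    ∃ (F : Matrix (Fin n) (Fin k) ℝ) (V : Matrix (Fin k) (Fin m) ℝ),
      (∀ i j, 0 ≤ F i j) ∧ (∀ i j, 0 ≤ V i j) ∧ A = F * V :=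
  exists_NRF_of_diagonal_principal_submatrix_general hA (fun i j => hdiag i j) hdpos
    (by rw [hrank, Fintype.card_fin])
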